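/- arXiv:1406.4852 — 2 statements merged into one kernel-verified Lean document; each statement's English description precedes it below -/
import Mathlib

section
/- Let (M, (W_j), (S_i^j)) be an exact-repair regenerating code with parameters (n,k,d) and secondary parameters (B,α,β). Then for every integer q with 0 ≤ q ≤ k one has B ≤ B_q, i.e. B ≤ qα + ((k−q)(k−q−1)/2)β + (d+1−k)(k−q)β. -/
open Finset

/-- Shannon entropy (base 2) of a finitely-valued random variable `X` on a finite
probability space with mass function `P`. -/
noncomputable def entH {Ω S : Type*} [Fintype Ω] (P : Ω → ℝ) (X : Ω → S) : ℝ :=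
  letI := Classical.decEq S
  ∑ s ∈ Finset.univ.image X,
    -((∑ ω ∈ Finset.univ.filter (fun ω => X ω = s), P ω) *
       Real.logb 2 (∑ ω ∈ Finset.univ.filter (fun ω => X ω = s), P ω))

/-- Conditional entropy `H(X | Y) = H(X, Y) - H(Y)`. -/
noncomputable def condH {Ω S T : Type*} [Fintype Ω] (P : Ω → ℝ) (X : Ω → S) (Y : Ω → T) : ℝ :=
  entH P (fun ω => (X ω, Y ω)) - entH P Y

/-- The joint random variable `W_J = (W_j : j ∈ J)`. -/
def jointW {Ω : Type*} {n : ℕ} {σW : Fin n → Type*} (W : ∀ j, Ω → σW j)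
    (J : Finset (Fin n)) : Ω → ∀ j : J, σW j.1 :=
  fun ω j => W j.1 ω

/-- The joint random variable `(S_i^j : (i,j) ∈ E)` for a set `E` of pairs. -/
def jointS {Ω : Type*} {n : ℕ} {σS : Fin n → Fin n → Type*} (S : ∀ i j, Ω → σS i j)
    (E : Finset (Fin n × Fin n)) : Ω → ∀ e : E, σS e.1.1 e.1.2 :=
  fun ω e => S e.1.1 e.1.2 ω

/-- The joint random variable `S_I^j = (S_i^j : i ∈ I)`. -/
def jointSto {Ω : Type*} {n : ℕ} {σS : Fin n → Fin n → Type*} (S : ∀ i j, Ω → σS i j)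
    (I : Finset (Fin n)) (j : Fin n) : Ω → ∀ i : I, σS i.1 j :=
  fun ω i => S i.1 j ω

/-- An exact-repair regenerating code with parameters `(n,k,d)` (with `1 ≤ k ≤ d ≤ n-1`)
and secondary parameters `(B,α,β)`: the file `M`, the stored data `W j` on server `j`
(servers indexed by `Fin n`, server `j` of the paper being index `j-1`), and the helper
information `S i j` sent from server `i` to repair server `j`. -/
structure IsRegenCode {Ω : Type*} [Fintype Ω] (n k d : ℕ) (B α β : ℝ) (P : Ω → ℝ)
    {σM : Type*} {σW : Fin n → Type*} {σS : Fin n → Fin n → Type*}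
    (M : Ω → σM) (W : ∀ j, Ω → σW j) (S : ∀ i j, Ω → σS i j) : Prop where
  prob_nonneg : ∀ ω, 0 ≤ P ω
  prob_sum : ∑ ω, P ω = 1
  hk : 1 ≤ k
  hkd : k ≤ d
  hdn : d + 1 ≤ n
  hB : 0 ≤ B
  hα : 0 ≤ α
  hβ : 0 ≤ β
  hMB : entH P M = B
  hWα : ∀ j, entH P (W j) = α
  hWM : ∀ j, condH P (W j) M = 0
  hMW : ∀ J : Finset (Fin n), k ≤ J.card → condH P M (jointW W J) = 0
  hSβ : ∀ i j, i ≠ j → entH P (S i j) = β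
  hSW : ∀ i j, i ≠ j → condH P (S i j) (W i) = 0
  hWS : ∀ (j : Fin n) (I : Finset (Fin n)), d ≤ I.card → j ∉ I →
    condH P (W j) (jointSto S I j) = 0

/-- `B_q = qα + ((k-q)(k-q-1)/2)β + (d+1-k)(k-q)β`. -/
noncomputable def Bfun (k d q : ℕ) (α β : ℝ) : ℝ :=
  (q : ℝ) * α + (((k - q) * (k - q - 1) : ℕ) : ℝ) / 2 * β
    + (((d + 1 - k) * (k - q) : ℕ) : ℝ) * β

section Entropy

open scoped Classical in
/-- The probability of the event that `X` takes the value it takes at `ω`. -/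
noncomputable def fiberProb {Ω S : Type*} [Fintype Ω] (P : Ω → ℝ) (X : Ω → S) (ω : Ω) : ℝ :=
  ∑ ω' with X ω' = X ω, P ω'

/-- `X` almost surely determines `Y`. -/
def Determines {Ω S T : Type*} (P : Ω → ℝ) (X : Ω → S) (Y : Ω → T) : Prop :=
  ∀ ω ω', P ω ≠ 0 → P ω' ≠ 0 → X ω = X ω' → Y ω = Y ω'

variable {Ω S T : Type*} [Fintype Ω] {P : Ω → ℝ} {X : Ω → S} {Y : Ω → T}

theorem fiberProb_pos (hP : ∀ ω, 0 ≤ P ω) {ω : Ω} (hω : P ω ≠ 0) : 0 < fiberProb P X ω := by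
  classical
  refine (lt_of_le_of_ne (hP ω) hω.symm).trans_le ?_
  exact Finset.single_le_sum (f := P) (fun i _ => hP i) (by simp)

theorem fiberProb_le_of_determines (hP : ∀ ω, 0 ≤ P ω) (h : Determines P X Y) {ω : Ω}
    (hω : P ω ≠ 0) : fiberProb P X ω ≤ fiberProb P Y ω := by
  classical
  unfold fiberProb
  rw [Finset.sum_filter, Finset.sum_filter]
  refine Finset.sum_le_sum fun ω' _ => ?_
  by_cases hω' : P ω' = 0
  · simp [hω']
  by_cases hX : X ω' = X ω
  · simp [hX, h ω' ω hω' hω hX]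
  · rw [if_neg hX]
    split_ifs
    · exact hP ω'
    · exact le_rfl

theorem entH_eq_sum (P : Ω → ℝ) (X : Ω → S) :
    entH P X = -∑ ω, P ω * Real.logb 2 (fiberProb P X ω) := by
  classical
  unfold entH
  rw [← Finset.sum_fiberwise_of_maps_to (s := Finset.univ) (t := Finset.univ.image X) (g := X)
    (fun ω _ => Finset.mem_image_of_mem X (Finset.mem_univ ω)), ← Finset.sum_neg_distrib]
  refine Finset.sum_congr (by ext; simp) fun s _ => ?_
  rw [Finset.sum_mul]
  congr 1
  refine Finset.sum_congr (by ext; simp) fun ω hω => ?_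
  obtain rfl : X ω = s := by simpa using hω
  unfold fiberProb
  congr

theorem entH_le_of_determines (hP : ∀ ω, 0 ≤ P ω) (h : Determines P X Y) :
    entH P Y ≤ entH P X := by
  rw [entH_eq_sum, entH_eq_sum, neg_le_neg_iff]
  refine Finset.sum_le_sum fun ω _ => ?_
  by_cases hω : P ω = 0
  · simp [hω]
  · exact mul_le_mul_of_nonneg_left (Real.logb_le_logb_of_le one_lt_two (fiberProb_pos hP hω)
      (fiberProb_le_of_determines hP h hω)) (hP ω)

theorem determines_of_condH_eq_zero (hP : ∀ ω, 0 ≤ P ω) (h : condH P X Y = 0) :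
    Determines P Y X := by
  classical
  have hdet : Determines P (fun ω => (X ω, Y ω)) Y := fun ω ω' _ _ h => congrArg Prod.snd h
  have hle : ∀ ω ∈ Finset.univ, P ω * Real.logb 2 (fiberProb P (fun ω => (X ω, Y ω)) ω) ≤
      P ω * Real.logb 2 (fiberProb P Y ω) := fun ω _ => by
    by_cases hω : P ω = 0
    · simp [hω]
    · exact mul_le_mul_of_nonneg_left (Real.logb_le_logb_of_le one_lt_two (fiberProb_pos hP hω)
        (fiberProb_le_of_determines hP hdet hω)) (hP ω)
  unfold condH at h
  rw [entH_eq_sum, entH_eq_sum] at h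
  have heq := (Finset.sum_eq_sum_iff_of_le hle).1 (by linarith)
  intro ω ω' hω hω' hY
  by_contra hX
  have h1 := Real.logb_injOn_pos one_lt_two (fiberProb_pos hP hω) (fiberProb_pos hP hω)
    (mul_left_cancel₀ hω (heq ω (Finset.mem_univ ω)))
  have h2 : fiberProb P (fun ω => (X ω, Y ω)) ω < fiberProb P Y ω := by
    refine Finset.sum_lt_sum_of_subset (i := ω') (fun i hi => ?_) ?_ ?_
      (lt_of_le_of_ne (hP ω') hω'.symm) fun j _ _ => hP j
    · simp only [Finset.mem_filter, Prod.mk.injEq] at hi ⊢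
      exact ⟨hi.1, hi.2.2⟩
    · simp [hY]
    · simp only [Finset.mem_filter, Prod.mk.injEq, not_and]
      exact fun _ h => absurd h.symm hX
  exact h2.ne h1

theorem sum_fiberProb_mul_div_le (hP : ∀ ω, 0 ≤ P ω) (hs : ∑ ω, P ω = 1) :
    ∑ ω, P ω * (fiberProb P X ω * fiberProb P Y ω / fiberProb P (fun ω => (X ω, Y ω)) ω) ≤ 1 := by
  classical
  set p : S → ℝ := fun s => ∑ ω with X ω = s, P ω
  set r : T → ℝ := fun t => ∑ ω with Y ω = t, P ω
  have hp : ∀ s, 0 ≤ p s := fun s => Finset.sum_nonneg fun ω _ => hP ω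
  have hr : ∀ t, 0 ≤ r t := fun t => Finset.sum_nonneg fun ω _ => hP ω
  have hps : ∑ s ∈ Finset.univ.image X, p s = 1 := by
    rw [← hs]
    exact Finset.sum_fiberwise_of_maps_to
      (fun ω _ => Finset.mem_image_of_mem X (Finset.mem_univ ω)) _
  have hrs : ∑ t ∈ Finset.univ.image Y, r t = 1 := by
    rw [← hs]
    exact Finset.sum_fiberwise_of_maps_to
      (fun ω _ => Finset.mem_image_of_mem Y (Finset.mem_univ ω)) _
  calc
    _ = ∑ z ∈ Finset.univ.image X ×ˢ Finset.univ.image Y, ∑ ω with (X ω, Y ω) = z,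
          P ω * (fiberProb P X ω * fiberProb P Y ω / fiberProb P (fun ω => (X ω, Y ω)) ω) :=
        (Finset.sum_fiberwise_of_maps_to (fun ω _ => by simp) _).symm
    _ ≤ ∑ z ∈ Finset.univ.image X ×ˢ Finset.univ.image Y, p z.1 * r z.2 := by
        refine Finset.sum_le_sum fun z _ => ?_
        have hz : ∀ ω ∈ Finset.univ.filter (fun ω => (X ω, Y ω) = z),
            P ω * (fiberProb P X ω * fiberProb P Y ω / fiberProb P (fun ω => (X ω, Y ω)) ω) =
            P ω * (p z.1 * r z.2 / ∑ ω with (X ω, Y ω) = z, P ω) := fun ω hω => by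
          obtain rfl : (X ω, Y ω) = z := by simpa using hω
          unfold fiberProb
          congr
        rw [Finset.sum_congr rfl hz, ← Finset.sum_mul]
        by_cases h0 : ∑ ω with (X ω, Y ω) = z, P ω = 0
        · simpa [h0] using mul_nonneg (hp z.1) (hr z.2)
        · rw [mul_div_cancel₀ _ h0]
    _ = 1 := by rw [Finset.sum_product, ← Finset.sum_mul_sum, hps, hrs, one_mul]

theorem entH_prod_le (hP : ∀ ω, 0 ≤ P ω) (hs : ∑ ω, P ω = 1) :
    entH P (fun ω => (X ω, Y ω)) ≤ entH P X + entH P Y := by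
  have key : ∑ ω, P ω * (Real.log (fiberProb P X ω) + Real.log (fiberProb P Y ω)
      - Real.log (fiberProb P (fun ω => (X ω, Y ω)) ω)) ≤ 0 := by
    calc
      _ ≤ ∑ ω, P ω * (fiberProb P X ω * fiberProb P Y ω /
            fiberProb P (fun ω => (X ω, Y ω)) ω - 1) := by
          refine Finset.sum_le_sum fun ω _ => ?_
          by_cases hω : P ω = 0
          · simp [hω]
          have hX := fiberProb_pos (X := X) hP hω
          have hY := fiberProb_pos (X := Y) hP hω
          have hXY := fiberProb_pos (X := fun ω => (X ω, Y ω)) hP hω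
          rw [← Real.log_mul hX.ne' hY.ne', ← Real.log_div (mul_pos hX hY).ne' hXY.ne']
          exact mul_le_mul_of_nonneg_left
            (Real.log_le_sub_one_of_pos (div_pos (mul_pos hX hY) hXY)) (hP ω)
      _ ≤ 0 := by
          simp only [mul_sub, mul_one, Finset.sum_sub_distrib, hs]
          linarith [sum_fiberProb_mul_div_le (X := X) (Y := Y) hP hs]
  have hdiff : entH P (fun ω => (X ω, Y ω)) - entH P X - entH P Y =
      (∑ ω, P ω * (Real.log (fiberProb P X ω) + Real.log (fiberProb P Y ω)
        - Real.log (fiberProb P (fun ω => (X ω, Y ω)) ω))) / Real.log 2 := by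
    simp only [entH_eq_sum, Real.logb, mul_add, mul_sub, Finset.sum_add_distrib,
      Finset.sum_sub_distrib, mul_div_assoc', ← Finset.sum_div]
    ring
  have := div_nonpos_of_nonpos_of_nonneg key (Real.log_nonneg one_le_two)
  linarith

theorem entH_le_add_of_determines {U : Type*} {Z : Ω → U} (hP : ∀ ω, 0 ≤ P ω)
    (hs : ∑ ω, P ω = 1) (h : Determines P (fun ω => (X ω, Y ω)) Z) :
    entH P Z ≤ entH P X + entH P Y :=
  (entH_le_of_determines hP h).trans (entH_prod_le hP hs)

theorem entH_eq_zero_of_const (hs : ∑ ω, P ω = 1) (h : ∀ ω ω', X ω = X ω') : entH P X = 0 := by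
  classical
  have : ∀ ω, fiberProb P X ω = 1 := fun ω => by
    rw [← hs, fiberProb, Finset.filter_true_of_mem fun ω' _ => h ω' ω]
  simp [entH_eq_sum, this]

end Entropy

section RegeneratingCode

variable {Ω : Type*} [Fintype Ω] {n k d : ℕ} {B α β : ℝ} {P : Ω → ℝ}
  {σM : Type*} {σW : Fin n → Type*} {σS : Fin n → Fin n → Type*}
  {M : Ω → σM} {W : ∀ j, Ω → σW j} {S : ∀ i j, Ω → σS i j}

theorem entH_jointSto_le (hcode : IsRegenCode n k d B α β P M W S) (j : Fin n)
    (I : Finset (Fin n)) (hj : j ∉ I) : entH P (jointSto S I j) ≤ I.card * β := by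
  induction I using Finset.induction_on with
  | empty =>
    rw [entH_eq_zero_of_const hcode.prob_sum fun ω ω' => funext fun i => absurd i.2 (Finset.notMem_empty _)]
    simp
  | insert a I ha ih =>
    rw [Finset.mem_insert, not_or] at hj
    have hdet : Determines P (fun ω => (jointSto S I j ω, S a j ω))
        (jointSto S (insert a I) j) := by
      intro ω ω' _ _ h
      rw [Prod.mk.injEq] at h
      funext ⟨i, hi⟩
      rcases Finset.mem_insert.1 hi with rfl | hi
      · exact h.2
      · exact congrFun h.1 ⟨i, hi⟩
    have h1 := entH_le_add_of_determines hcode.prob_nonneg hcode.prob_sum hdet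
    rw [hcode.hSβ a j (Ne.symm hj.1)] at h1
    have h2 := ih hj.2
    rw [Finset.card_insert_of_notMem ha]
    push_cast
    linarith

theorem entH_jointW_insert_le (hcode : IsRegenCode n k d B α β P M W S) (j : Fin n)
    (J : Finset (Fin n)) : entH P (jointW W (insert j J)) ≤ entH P (jointW W J) + α := by
  rw [← hcode.hWα j]
  refine entH_le_add_of_determines hcode.prob_nonneg hcode.prob_sum fun ω ω' _ _ h => ?_
  rw [Prod.mk.injEq] at h
  funext ⟨i, hi⟩
  rcases Finset.mem_insert.1 hi with rfl | hi
  · exact h.2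
  · exact congrFun h.1 ⟨i, hi⟩

/-- Server `j` can be repaired from the servers in `J` together with the helpers in `I`. -/
theorem entH_jointW_insert_le_of_repair (hcode : IsRegenCode n k d B α β P M W S) (j : Fin n)
    (J I : Finset (Fin n)) (hjJ : j ∉ J) (hjI : j ∉ I) (hd : d ≤ (J ∪ I).card) :
    entH P (jointW W (insert j J)) ≤ entH P (jointW W J) + I.card * β := by
  have hP := hcode.prob_nonneg
  have hdet : Determines P (fun ω => (jointW W J ω, jointSto S I j ω))
      (jointW W (insert j J)) := by
    intro ω ω' hω hω' h
    rw [Prod.mk.injEq] at h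
    funext ⟨i, hi⟩
    rcases Finset.mem_insert.1 hi with rfl | hi
    · refine determines_of_condH_eq_zero hP (hcode.hWS i (J ∪ I) hd (by simp [hjJ, hjI]))
        ω ω' hω hω' (funext fun ⟨l, hl⟩ => ?_)
      rcases Finset.mem_union.1 hl with hl | hl
      · exact determines_of_condH_eq_zero hP (hcode.hSW l i (ne_of_mem_of_not_mem hl hjJ))
          ω ω' hω hω' (congrFun h.1 ⟨l, hl⟩)
      · exact congrFun h.2 ⟨l, hl⟩
    · exact congrFun h.1 ⟨i, hi⟩
  linarith [entH_le_add_of_determines hP hcode.prob_sum hdet, entH_jointSto_le hcode j I hjI]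

theorem filter_val_lt_succ {m : ℕ} (hm : m < n) :
    Finset.univ.filter (fun i : Fin n => i.1 < m + 1) =
      insert ⟨m, hm⟩ (Finset.univ.filter (fun i : Fin n => i.1 < m)) := by
  ext i
  simp only [Finset.mem_filter, Finset.mem_univ, true_and, Finset.mem_insert, Fin.ext_iff]
  omega

theorem entH_jointW_initial_le (hcode : IsRegenCode n k d B α β P M W S) (q : ℕ) (hq : q ≤ n) :
    entH P (jointW W (Finset.univ.filter (fun i : Fin n => i.1 < q))) ≤ q * α := by
  induction q with
  | zero =>
    rw [entH_eq_zero_of_const hcode.prob_sum fun ω ω' => funext fun i => absurd i.2 (by simp)]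
    simp
  | succ q ih =>
    rw [filter_val_lt_succ hq]
    push_cast
    linarith [entH_jointW_insert_le hcode ⟨q, hq⟩ (Finset.univ.filter (fun i : Fin n => i.1 < q)),
      ih (by omega)]

theorem entH_jointW_initial_add_le (hcode : IsRegenCode n k d B α β P M W S) (q r : ℕ)
    (hqr : q + r ≤ d) :
    entH P (jointW W (Finset.univ.filter (fun i : Fin n => i.1 < q + r))) ≤
      q * α + (r * (d - q) - r * (r - 1) / 2) * β := by
  have hdn := hcode.hdn
  induction r with
  | zero => simpa using entH_jointW_initial_le hcode q (by omega)
  | succ r ih =>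
    have hm : q + r < n := by omega
    set J := Finset.univ.filter (fun i : Fin n => i.1 < q + r)
    set I := Finset.Ioc (⟨q + r, hm⟩ : Fin n) ⟨d, by omega⟩
    have hI : I.card = d - (q + r) := by simp [I]
    have hJ : J.card = q + r := by
      have : J = Finset.Iio ⟨q + r, hm⟩ := by
        ext i
        simp [J, Fin.lt_def]
      simp [this]
    have hdisj : Disjoint J I := Finset.disjoint_left.2 fun i hi hi' => by
      simp only [J, I, Finset.mem_filter, Finset.mem_Ioc, Fin.lt_def] at hi hi'
      omega
    have h := entH_jointW_insert_le_of_repair hcode ⟨q + r, hm⟩ J I (by simp [J]) (by simp [I])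
      (by rw [Finset.card_union_of_disjoint hdisj]; omega)
    rw [hI, Nat.cast_sub (by omega)] at h
    rw [← add_assoc, filter_val_lt_succ hm]
    have h' := ih (by omega)
    push_cast at h ⊢
    linarith

end RegeneratingCode

/-- `B ≤ B_q` for every `0 ≤ q ≤ k`. -/
theorem stmt_0 {Ω : Type*} [Fintype Ω] {n k d : ℕ} {B α β : ℝ} {P : Ω → ℝ}
    {σM : Type*} {σW : Fin n → Type*} {σS : Fin n → Fin n → Type*}
    {M : Ω → σM} {W : ∀ j, Ω → σW j} {S : ∀ i j, Ω → σS i j}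
    (hcode : IsRegenCode n k d B α β P M W S)
    (q : ℕ) (hq : q ≤ k) :
    B ≤ Bfun k d q α β := by
  have hkd := hcode.hkd
  have hdn := hcode.hdn
  have hP := hcode.prob_nonneg
  obtain ⟨r, rfl⟩ := Nat.exists_eq_add_of_le hq
  have hcard : q + r ≤ (Finset.univ.filter (fun i : Fin n => i.1 < q + r)).card := by
    have : Finset.univ.filter (fun i : Fin n => i.1 < q + r) = Finset.Iio ⟨q + r, by omega⟩ := by
      ext i
      simp [Fin.lt_def]
    simp [this]
  have hM := entH_le_of_determines hP (determines_of_condH_eq_zero hP (hcode.hMW _ hcard))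
  rw [hcode.hMB] at hM
  refine hM.trans ((entH_jointW_initial_add_le hcode q r hkd).trans_eq ?_)
  have hr : ((r * (r - 1) : ℕ) : ℝ) = r * (r - 1) := by
    cases r <;> simp
  rw [Bfun, Nat.add_sub_cancel_left, hr, Nat.cast_mul, Nat.cast_sub (by omega)]
  push_cast
  ring
end

section
/- Let p ≥ 2 be an integer and let (M, (W_j), (S_i^j)) be an exact-repair regenerating code with parameters (n, k, d) = (n, 2p, 3p), where n ≥ 3p+1, and secondary parameters (B,α,β). Then B ≤ B_p − (p²−1)β/16, where B_p = pα + (p(p−1)/2)β + (p+1)pβ is computed with k = 2p and d = 3p. -/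
open Finset

/-! ### Entropy of relations -/

open Classical in
/-- The entropy of the partition of `Ω` into the classes of `r`. -/
noncomputable def relEnt {Ω : Type*} [Fintype Ω] (P : Ω → ℝ) (r : Ω → Ω → Prop) : ℝ :=
  -∑ ω, P ω * Real.logb 2 (∑ ω' with r ω ω', P ω')

open Classical in
theorem entH_eq_relEnt {Ω T : Type*} [Fintype Ω] (P : Ω → ℝ) (X : Ω → T) :
    entH P X = relEnt P (fun ω ω' => X ω = X ω') := by
  unfold entH relEnt
  rw [← Finset.sum_neg_distrib, ← Finset.sum_fiberwise_of_maps_to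
    (t := Finset.univ.image X) (g := X) (fun ω _ => Finset.mem_image_of_mem X (Finset.mem_univ ω))]
  refine Finset.sum_congr (by congr!) fun s _ => ?_
  have key : ∀ ω ∈ Finset.univ.filter (fun ω => X ω = s),
      -(P ω * Real.logb 2 (∑ ω' with X ω = X ω', P ω')) =
        P ω * -Real.logb 2 (∑ ω' with X ω' = s, P ω') := by
    intro ω hω
    have : X ω = s := by simpa using hω
    subst this
    simp only [eq_comm, mul_neg]
  rw [Finset.sum_congr rfl key, ← Finset.sum_mul, mul_neg]

section Entropy

variable {Ω : Type*} [Fintype Ω] {P : Ω → ℝ}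

open Classical in
theorem relEnt_true (h1 : ∑ ω, P ω = 1) : relEnt P (fun _ _ => True) = 0 := by
  simp [relEnt, h1]

open Classical in
theorem relEnt_mono (h0 : ∀ ω, 0 ≤ P ω) {r s : Ω → Ω → Prop} (hs : ∀ ω, s ω ω)
    (hsr : ∀ ω ω', s ω ω' → r ω ω') : relEnt P r ≤ relEnt P s := by
  unfold relEnt
  refine neg_le_neg (Finset.sum_le_sum fun ω _ => ?_)
  rcases (h0 ω).eq_or_lt with h | h
  · simp [← h]
  · have hpos : 0 < ∑ ω' with s ω ω', P ω' :=
      lt_of_lt_of_le h (Finset.single_le_sum (f := P) (fun i _ => h0 i) (by simp [hs ω]))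
    refine mul_le_mul_of_nonneg_left (Real.logb_le_logb_of_le (by norm_num) hpos ?_) h.le
    refine Finset.sum_le_sum_of_subset_of_nonneg ?_ fun i _ _ => h0 i
    intro ω' hω'
    simp only [Finset.mem_filter, Finset.mem_univ, true_and] at hω' ⊢
    exact hsr _ _ hω'

open Classical in
/-- Average likelihood ratio bound behind the submodularity of entropy. -/
theorem sum_ratio_le_one (h0 : ∀ ω, 0 ≤ P ω) (h1 : ∑ ω, P ω = 1)
    {r s t : Ω → Ω → Prop} (hr : Equivalence r) (hs : Equivalence s) (ht : Equivalence t)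
    (hrt : ∀ ω ω', r ω ω' → t ω ω') (hst : ∀ ω ω', s ω ω' → t ω ω') :
    ∑ ω, P ω * (((∑ ω' with r ω ω', P ω') * (∑ ω' with s ω ω', P ω')) /
      ((∑ ω' with r ω ω' ∧ s ω ω', P ω') * (∑ ω' with t ω ω', P ω'))) ≤ 1 := by
  set u : Ω → ℝ := fun ω => ∑ ω' with r ω ω' ∧ s ω ω', P ω' with hu
  set c : Ω → ℝ := fun ω => ∑ ω' with t ω ω', P ω' with hc
  have u0 : ∀ ω, 0 ≤ u ω := fun ω => Finset.sum_nonneg fun i _ => h0 i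
  have c0 : ∀ ω, 0 ≤ c ω := fun ω => Finset.sum_nonneg fun i _ => h0 i
  have inner : ∀ ω₁ ω₂, (∑ ω, if r ω ω₁ ∧ s ω ω₂ then P ω / (u ω * c ω) else 0) ≤
      if t ω₁ ω₂ then 1 / c ω₁ else 0 := by
    intro ω₁ ω₂
    by_cases hex : ∃ ω, r ω ω₁ ∧ s ω ω₂
    · obtain ⟨ω₀, hr₀, hs₀⟩ := hex
      have ht₁₂ : t ω₁ ω₂ := ht.trans (ht.symm (hrt _ _ hr₀)) (hst _ _ hs₀)
      rw [if_pos ht₁₂]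
      have hterm : ∀ ω, (if r ω ω₁ ∧ s ω ω₂ then P ω / (u ω * c ω) else 0) =
          (if r ω₀ ω ∧ s ω₀ ω then P ω else 0) / (u ω₀ * c ω₁) := by
        intro ω
        by_cases h : r ω ω₁ ∧ s ω ω₂
        · have hr' : r ω₀ ω := hr.trans hr₀ (hr.symm h.1)
          have hs' : s ω₀ ω := hs.trans hs₀ (hs.symm h.2)
          have e1 : u ω = u ω₀ := by
            simp only [hu]
            congr 1
            ext x
            simp only [Finset.mem_filter, Finset.mem_univ, true_and]
            exact ⟨fun hx => ⟨hr.trans hr' hx.1, hs.trans hs' hx.2⟩,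
              fun hx => ⟨hr.trans (hr.symm hr') hx.1, hs.trans (hs.symm hs') hx.2⟩⟩
          have e2 : c ω = c ω₁ := by
            have h' := hrt _ _ h.1
            simp only [hc]
            congr 1
            ext x
            simp only [Finset.mem_filter, Finset.mem_univ, true_and]
            exact ⟨fun hx => ht.trans (ht.symm h') hx, fun hx => ht.trans h' hx⟩
          rw [if_pos h, if_pos ⟨hr', hs'⟩, e1, e2]
        · have h' : ¬ (r ω₀ ω ∧ s ω₀ ω) := fun hx =>
            h ⟨hr.trans (hr.symm hx.1) hr₀, hs.trans (hs.symm hx.2) hs₀⟩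
          rw [if_neg h, if_neg h', zero_div]
      simp_rw [hterm]
      rw [← Finset.sum_div, ← Finset.sum_filter]
      change u ω₀ / (u ω₀ * c ω₁) ≤ _
      rw [div_mul_eq_div_div]
      exact div_le_div_of_nonneg_right (div_self_le_one _) (c0 _)
    · push Not at hex
      have : ∀ ω, (if r ω ω₁ ∧ s ω ω₂ then P ω / (u ω * c ω) else 0) = 0 := fun ω =>
        if_neg fun h => hex ω h.1 h.2
      simp_rw [this]
      rw [Finset.sum_const_zero]
      split_ifs
      · exact div_nonneg zero_le_one (c0 _)
      · exact le_rfl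
  calc ∑ ω, P ω * (((∑ ω' with r ω ω', P ω') * (∑ ω' with s ω ω', P ω')) / (u ω * c ω))
      = ∑ ω, ∑ ω₁, ∑ ω₂, P ω₁ * P ω₂ *
          (if r ω ω₁ ∧ s ω ω₂ then P ω / (u ω * c ω) else 0) := by
        refine Finset.sum_congr rfl fun ω _ => ?_
        rw [Finset.sum_filter, Finset.sum_filter, Finset.sum_mul_sum, mul_div_assoc',
          Finset.mul_sum, Finset.sum_div]
        refine Finset.sum_congr rfl fun ω₁ _ => ?_
        rw [Finset.mul_sum, Finset.sum_div]
        refine Finset.sum_congr rfl fun ω₂ _ => ?_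
        by_cases h1 : r ω ω₁ <;> by_cases h2 : s ω ω₂ <;> simp [h1, h2]
        ring
    _ = ∑ ω₁, ∑ ω₂, P ω₁ * P ω₂ *
          ∑ ω, (if r ω ω₁ ∧ s ω ω₂ then P ω / (u ω * c ω) else 0) := by
        rw [Finset.sum_comm]
        refine Finset.sum_congr rfl fun ω₁ _ => ?_
        rw [Finset.sum_comm]
        refine Finset.sum_congr rfl fun ω₂ _ => ?_
        rw [Finset.mul_sum]
    _ ≤ ∑ ω₁, ∑ ω₂, P ω₁ * P ω₂ * (if t ω₁ ω₂ then 1 / c ω₁ else 0) :=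
        Finset.sum_le_sum fun ω₁ _ => Finset.sum_le_sum fun ω₂ _ =>
          mul_le_mul_of_nonneg_left (inner ω₁ ω₂) (mul_nonneg (h0 _) (h0 _))
    _ = ∑ ω₁, P ω₁ * (c ω₁ / c ω₁) := by
        refine Finset.sum_congr rfl fun ω₁ _ => ?_
        conv_rhs => rw [show c ω₁ / c ω₁ = (∑ ω₂ with t ω₁ ω₂, P ω₂) * (1 / c ω₁) by
          rw [mul_one_div]]
        rw [Finset.sum_filter, Finset.sum_mul, Finset.mul_sum]
        refine Finset.sum_congr rfl fun ω₂ _ => ?_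
        split_ifs <;> ring
    _ ≤ ∑ ω₁, P ω₁ :=
        Finset.sum_le_sum fun ω₁ _ => mul_le_of_le_one_right (h0 _) (div_self_le_one _)
    _ = 1 := h1

open Classical in
theorem relEnt_submodular (h0 : ∀ ω, 0 ≤ P ω) (h1 : ∑ ω, P ω = 1)
    {r s t : Ω → Ω → Prop} (hr : Equivalence r) (hs : Equivalence s) (ht : Equivalence t)
    (hrt : ∀ ω ω', r ω ω' → t ω ω') (hst : ∀ ω ω', s ω ω' → t ω ω') :
    relEnt P (fun ω ω' => r ω ω' ∧ s ω ω') + relEnt P t ≤ relEnt P r + relEnt P s := by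
  have key : ∑ ω, P ω * (Real.logb 2 (∑ ω' with r ω ω', P ω') +
        Real.logb 2 (∑ ω' with s ω ω', P ω') -
        Real.logb 2 (∑ ω' with r ω ω' ∧ s ω ω', P ω') -
        Real.logb 2 (∑ ω' with t ω ω', P ω')) ≤
      ∑ ω, (P ω * (((∑ ω' with r ω ω', P ω') * (∑ ω' with s ω ω', P ω')) /
      ((∑ ω' with r ω ω' ∧ s ω ω', P ω') * (∑ ω' with t ω ω', P ω'))) - P ω) / Real.log 2 := by
    refine Finset.sum_le_sum fun ω _ => ?_
    rcases (h0 ω).eq_or_lt with h | h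
    · simp [← h]
    · have pos : ∀ q : Ω → Ω → Prop, q ω ω → 0 < ∑ ω' with q ω ω', P ω' := fun q hq =>
        lt_of_lt_of_le h (Finset.single_le_sum (f := P) (fun i _ => h0 i) (by simp [hq]))
      have pr := pos r (hr.refl ω)
      have ps := pos s (hs.refl ω)
      have pt := pos t (ht.refl ω)
      have pu : 0 < ∑ ω' with r ω ω' ∧ s ω ω', P ω' := by
        convert pos (fun ω ω' => r ω ω' ∧ s ω ω') ⟨hr.refl ω, hs.refl ω⟩
      have hl := Real.log_le_sub_one_of_pos (div_pos (mul_pos pr ps) (mul_pos pu pt))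
      rw [Real.log_div (mul_pos pr ps).ne' (mul_pos pu pt).ne', Real.log_mul pr.ne' ps.ne',
        Real.log_mul pu.ne' pt.ne'] at hl
      have h2 : 0 < Real.log 2 := Real.log_pos (by norm_num)
      simp only [Real.logb]
      rw [← add_div, ← sub_div, ← sub_div, mul_div_assoc']
      refine div_le_div_of_nonneg_right ?_ h2.le
      refine (mul_le_mul_of_nonneg_left ((sub_sub _ _ _).trans_le hl) h.le).trans_eq ?_
      rw [mul_sub, mul_one]
  rw [← Finset.sum_div, Finset.sum_sub_distrib, h1] at key
  have hle := sum_ratio_le_one h0 h1 hr hs ht hrt hst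
  have hnonpos := div_nonpos_of_nonpos_of_nonneg (sub_nonpos.2 hle)
    (Real.log_pos (by norm_num : (1 : ℝ) < 2)).le
  have hsum := key.trans hnonpos
  simp only [mul_add, mul_sub, Finset.sum_add_distrib, Finset.sum_sub_distrib] at hsum
  simp only [relEnt]
  linarith

end Entropy

/-! ### Polymatroids with repair -/

/-- The properties of the joint entropies of the stored data (`Sum.inl j`) and of the helper
information (`Sum.inr (i, j)`) of a regenerating code that enter the outer bound. -/
structure IsRepairPolymatroid (n k d : ℕ) (B α β : ℝ)
    (F : Finset (Fin n ⊕ Fin n × Fin n) → ℝ) : Prop where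
  empty : F ∅ = 0
  mono : ∀ {A A'}, A ⊆ A' → F A ≤ F A'
  submodular : ∀ {A A' D}, D ⊆ A → D ⊆ A' → F (A ∪ A') + F D ≤ F A + F A'
  stored_le : ∀ j, F {Sum.inl j} ≤ α
  helper_le : ∀ i j, i ≠ j → F {Sum.inr (i, j)} ≤ β
  file_le : ∀ J : Finset (Fin n), k ≤ J.card → B ≤ F (J.image Sum.inl)
  helper_of_stored : ∀ i j, i ≠ j → F {Sum.inr (i, j), Sum.inl i} ≤ F {Sum.inl i}
  repair : ∀ (j : Fin n) (I : Finset (Fin n)), d ≤ I.card → j ∉ I →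
    F (insert (Sum.inl j) ((I ×ˢ {j}).image Sum.inr)) ≤ F ((I ×ˢ {j}).image Sum.inr)

/-- The relation `ω ∼ ω'` when all variables indexed by `A` agree at `ω` and `ω'`. -/
def agreeOn {Ω : Type*} {n : ℕ} {σW : Fin n → Type*} {σS : Fin n → Fin n → Type*}
    (W : ∀ j, Ω → σW j) (S : ∀ i j, Ω → σS i j) (A : Finset (Fin n ⊕ Fin n × Fin n))
    (ω ω' : Ω) : Prop :=
  (∀ j, Sum.inl j ∈ A → W j ω = W j ω') ∧ ∀ i j, Sum.inr (i, j) ∈ A → S i j ω = S i j ω'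

theorem agreeOn_equivalence {Ω : Type*} {n : ℕ} {σW : Fin n → Type*}
    {σS : Fin n → Fin n → Type*} (W : ∀ j, Ω → σW j) (S : ∀ i j, Ω → σS i j)
    (A : Finset (Fin n ⊕ Fin n × Fin n)) : Equivalence (agreeOn W S A) where
  refl _ := ⟨fun _ _ => rfl, fun _ _ _ => rfl⟩
  symm h := ⟨fun j hj => (h.1 j hj).symm, fun i j hj => (h.2 i j hj).symm⟩
  trans h h' := ⟨fun j hj => (h.1 j hj).trans (h'.1 j hj),
    fun i j hj => (h.2 i j hj).trans (h'.2 i j hj)⟩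

theorem agreeOn_mono {Ω : Type*} {n : ℕ} {σW : Fin n → Type*} {σS : Fin n → Fin n → Type*}
    {W : ∀ j, Ω → σW j} {S : ∀ i j, Ω → σS i j} {A A' : Finset (Fin n ⊕ Fin n × Fin n)}
    (h : A ⊆ A') {ω ω' : Ω} (hA : agreeOn W S A' ω ω') : agreeOn W S A ω ω' :=
  ⟨fun j hj => hA.1 j (h hj), fun i j hj => hA.2 i j (h hj)⟩

theorem IsRegenCode.isRepairPolymatroid {Ω : Type*} [Fintype Ω] {n k d : ℕ} {B α β : ℝ}
    {P : Ω → ℝ} {σM : Type*} {σW : Fin n → Type*} {σS : Fin n → Fin n → Type*}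
    {M : Ω → σM} {W : ∀ j, Ω → σW j} {S : ∀ i j, Ω → σS i j}
    (hc : IsRegenCode n k d B α β P M W S) :
    IsRepairPolymatroid n k d B α β (fun A => relEnt P (agreeOn W S A)) where
  empty := by
    rw [← relEnt_true hc.prob_sum]
    congr
    funext ω ω'
    simp [agreeOn]
  mono h := relEnt_mono hc.prob_nonneg (fun ω => (agreeOn_equivalence W S _).refl ω)
    fun _ _ => agreeOn_mono h
  submodular {A A' D} h h' := by
    have := relEnt_submodular hc.prob_nonneg hc.prob_sum (agreeOn_equivalence W S A)
      (agreeOn_equivalence W S A') (agreeOn_equivalence W S D)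
      (fun _ _ => agreeOn_mono h) (fun _ _ => agreeOn_mono h')
    convert this using 3
    funext ω ω'
    apply propext
    simp only [agreeOn, Finset.mem_union, or_imp, forall_and]
    tauto
  stored_le j := by
    rw [← hc.hWα j, entH_eq_relEnt]
    apply le_of_eq
    congr
    funext ω ω'
    simp [agreeOn]
  helper_le i j hij := by
    rw [← hc.hSβ i j hij, entH_eq_relEnt]
    apply le_of_eq
    congr
    funext ω ω'
    apply propext
    simp only [agreeOn, Finset.mem_singleton, reduceCtorEq, false_imp_iff, implies_true,
      Sum.inr.injEq, Prod.mk.injEq, true_and]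
    exact ⟨fun h => h i j ⟨rfl, rfl⟩, by rintro h _ _ ⟨rfl, rfl⟩; exact h⟩
  file_le J hJ := by
    have h := hc.hMW J hJ
    rw [condH, sub_eq_zero, entH_eq_relEnt, entH_eq_relEnt] at h
    have hrel : (fun ω ω' => jointW W J ω = jointW W J ω') =
        agreeOn W S (J.image Sum.inl) := by
      funext ω ω'
      simp [agreeOn, jointW, funext_iff]
    rw [← hrel, ← h, ← hc.hMB, entH_eq_relEnt]
    refine relEnt_mono hc.prob_nonneg (fun _ => rfl) fun ω ω' h' => ?_
    exact (Prod.ext_iff.1 h').1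
  helper_of_stored i j hij := by
    have h := hc.hSW i j hij
    rw [condH, sub_eq_zero, entH_eq_relEnt, entH_eq_relEnt] at h
    have hrel : (fun ω ω' => W i ω = W i ω') = agreeOn W S {Sum.inl i} := by
      funext ω ω'
      simp [agreeOn]
    have hrel' : (fun ω ω' => (S i j ω, W i ω) = (S i j ω', W i ω')) =
        agreeOn W S {Sum.inr (i, j), Sum.inl i} := by
      funext ω ω'
      apply propext
      simp only [agreeOn, Finset.mem_singleton, Finset.mem_insert, reduceCtorEq, false_or,
        or_false, Sum.inr.injEq, Sum.inl.injEq, Prod.mk.injEq, forall_eq]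
      exact ⟨fun h => ⟨h.2, by rintro _ _ ⟨rfl, rfl⟩; exact h.1⟩,
        fun h => ⟨h.2 i j ⟨rfl, rfl⟩, h.1⟩⟩
    rw [← hrel, ← hrel', h]
  repair j I hI hj := by
    have h := hc.hWS j I hI hj
    rw [condH, sub_eq_zero, entH_eq_relEnt, entH_eq_relEnt] at h
    have hrel : (fun ω ω' => jointSto S I j ω = jointSto S I j ω') =
        agreeOn W S ((I ×ˢ {j}).image Sum.inr) := by
      funext ω ω'
      apply propext
      simp only [agreeOn, jointSto, funext_iff, Finset.mem_image, Finset.mem_product,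
        Finset.mem_singleton, Prod.exists, Subtype.forall, reduceCtorEq, and_false,
        exists_false, false_imp_iff, implies_true, true_and, Sum.inr.injEq, Prod.mk.injEq]
      exact ⟨by rintro h _ _ ⟨a, b, ⟨ha, rfl⟩, rfl, rfl⟩; exact h a ha,
        fun h a ha => h a j ⟨a, j, ⟨ha, rfl⟩, rfl, rfl⟩⟩
    have hrel' : (fun ω ω' => (W j ω, jointSto S I j ω) = (W j ω', jointSto S I j ω')) =
        agreeOn W S (insert (Sum.inl j) ((I ×ˢ {j}).image Sum.inr)) := by
      funext ω ω'
      have hr := congrFun (congrFun hrel ω) ω'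
      apply propext
      rw [Prod.mk.injEq, hr]
      simp only [agreeOn, Finset.mem_insert, reduceCtorEq, false_or, Sum.inl.injEq]
      constructor
      · rintro ⟨h1, h2, h3⟩
        exact ⟨by rintro i (rfl | hi); exacts [h1, h2 i hi], h3⟩
      · rintro ⟨h1, h2⟩
        exact ⟨h1 j (Or.inl rfl), fun i hi => h1 i (Or.inr hi), h2⟩
    rw [← hrel, ← hrel', h]

namespace IsRepairPolymatroid

variable {n k d : ℕ} {B α β : ℝ} {F : Finset (Fin n ⊕ Fin n × Fin n) → ℝ}

theorem union_le (hF : IsRepairPolymatroid n k d B α β F)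
    (A A' : Finset (Fin n ⊕ Fin n × Fin n)) : F (A ∪ A') ≤ F A + F A' := by
  have := hF.submodular (Finset.empty_subset A) (Finset.empty_subset A')
  linarith [hF.empty]

theorem union_le_card_mul (hF : IsRepairPolymatroid n k d B α β F) {c : ℝ}
    (A X : Finset (Fin n ⊕ Fin n × Fin n)) (hX : ∀ v ∈ X, F {v} ≤ c) :
    F (A ∪ X) ≤ F A + X.card * c := by
  induction X using Finset.induction_on with
  | empty => simp
  | insert v X hv ih =>
    have h1 := ih fun v hv => hX v (Finset.mem_insert_of_mem hv)
    have h2 := hF.union_le {v} (A ∪ X)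
    have h3 := hX v (Finset.mem_insert_self v X)
    rw [Finset.union_insert, ← Finset.singleton_union, Finset.card_insert_of_notMem hv]
    push_cast
    linarith

theorem le_card_mul (hF : IsRepairPolymatroid n k d B α β F) {c : ℝ}
    (X : Finset (Fin n ⊕ Fin n × Fin n)) (hX : ∀ v ∈ X, F {v} ≤ c) :
    F X ≤ X.card * c := by
  simpa [hF.empty] using hF.union_le_card_mul ∅ X hX

/-- Adding variables that are functions of the given ones does not increase the entropy. -/
theorem union_le_of_determined (hF : IsRepairPolymatroid n k d B α β F)
    (A X : Finset (Fin n ⊕ Fin n × Fin n))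
    (hX : ∀ v ∈ X, ∃ D ⊆ A, F (insert v D) ≤ F D) : F (A ∪ X) ≤ F A := by
  induction X using Finset.induction_on with
  | empty => simp
  | insert v X hv ih =>
    have h1 := ih fun v hv => hX v (Finset.mem_insert_of_mem hv)
    obtain ⟨D, hD, hvD⟩ := hX v (Finset.mem_insert_self v X)
    have h2 := hF.submodular (A := insert v D) (A' := A ∪ X) (D := D)
      (Finset.subset_insert _ _) (hD.trans Finset.subset_union_left)
    have h3 := hF.mono (show A ∪ insert v X ⊆ insert v D ∪ (A ∪ X) by
      intro x; simp only [Finset.mem_union, Finset.mem_insert]; tauto)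
    linarith

theorem union_helpers_le (hF : IsRepairPolymatroid n k d B α β F)
    (A X : Finset (Fin n ⊕ Fin n × Fin n))
    (hX : ∀ v ∈ X, v ∈ A ∨ ∃ i j, i ≠ j ∧ v = Sum.inr (i, j) ∧ Sum.inl i ∈ A) :
    F (A ∪ X) ≤ F A := by
  refine hF.union_le_of_determined A X fun v hv => ?_
  rcases hX v hv with h | ⟨i, j, hij, rfl, hi⟩
  · exact ⟨A, subset_rfl, by rw [Finset.insert_eq_of_mem h]⟩
  · exact ⟨{Sum.inl i}, by simpa using hi, hF.helper_of_stored i j hij⟩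

theorem helpers_le (hF : IsRepairPolymatroid n k d B α β F) {I J : Finset (Fin n)}
    (h : Disjoint I J) : F ((I ×ˢ J).image Sum.inr) ≤ (I.card * J.card : ℕ) * β := by
  rw [← Finset.card_product, ← Finset.card_image_of_injective (I ×ˢ J)
    (Sum.inr_injective (α := Fin n))]
  refine hF.le_card_mul _ fun v hv => ?_
  obtain ⟨⟨i, j⟩, hij, rfl⟩ := Finset.mem_image.1 hv
  rw [Finset.mem_product] at hij
  exact hF.helper_le i j (Finset.disjoint_left.1 h hij.1 |> fun h' e => h' (e ▸ hij.2))

theorem storeds_le (hF : IsRepairPolymatroid n k d B α β F) (J : Finset (Fin n)) :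
    F (J.image Sum.inl) ≤ J.card * α := by
  rw [← Finset.card_image_of_injective J (Sum.inl_injective (β := Fin n × Fin n))]
  refine hF.le_card_mul _ fun v hv => ?_
  obtain ⟨j, _, rfl⟩ := Finset.mem_image.1 hv
  exact hF.stored_le j

/-- Repair of a node `j` with help from known helpers `G` and new helpers `C`. -/
theorem insert_stored_le (hF : IsRepairPolymatroid n k d B α β F)
    (A : Finset (Fin n ⊕ Fin n × Fin n)) (G C : Finset (Fin n)) (j : Fin n)
    (hjG : j ∉ G) (hjC : j ∉ C) (hd : d ≤ (G ∪ C).card)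
    (hG : ∀ i ∈ G, Sum.inr (i, j) ∈ A ∨ Sum.inl i ∈ A) :
    F (insert (Sum.inl j) A) ≤ F A + C.card * β := by
  have hne : ∀ X : Finset (Fin n), j ∉ X → ∀ i ∈ X, i ≠ j := fun X hX i hi e => hX (e ▸ hi)
  have h1 : F (A ∪ (C ×ˢ {j}).image Sum.inr) ≤ F A + C.card * β := by
    have := hF.union_le A ((C ×ˢ {j}).image Sum.inr)
    have h' := hF.helpers_le (I := C) (J := {j}) (by simpa using hjC)
    rw [Finset.card_singleton, mul_one] at h'
    linarith
  have h2 : F (A ∪ (C ×ˢ {j}).image Sum.inr ∪ (G ×ˢ {j}).image Sum.inr) ≤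
      F (A ∪ (C ×ˢ {j}).image Sum.inr) := by
    refine hF.union_helpers_le _ _ fun v hv => ?_
    obtain ⟨⟨i, j'⟩, hij, rfl⟩ := Finset.mem_image.1 hv
    rw [Finset.mem_product, Finset.mem_singleton] at hij
    obtain ⟨hi, rfl⟩ := hij
    rcases hG i hi with h | h
    · exact Or.inl (Finset.mem_union_left _ h)
    · exact Or.inr ⟨i, _, hne G hjG i hi, rfl, Finset.mem_union_left _ h⟩
  have h3 : F (A ∪ (C ×ˢ {j}).image Sum.inr ∪ (G ×ˢ {j}).image Sum.inr ∪ {Sum.inl j}) ≤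
      F (A ∪ (C ×ˢ {j}).image Sum.inr ∪ (G ×ˢ {j}).image Sum.inr) := by
    refine hF.union_le_of_determined _ _ fun v hv => ?_
    obtain rfl := Finset.mem_singleton.1 hv
    have hj : j ∉ G ∪ C := by simp [hjG, hjC]
    have hr := hF.repair j (G ∪ C) hd hj
    refine ⟨_, ?_, hr⟩
    rw [Finset.union_product, Finset.image_union, Finset.union_comm]
    exact Finset.union_subset_union_left Finset.subset_union_right
  have h4 : insert (Sum.inl j) A ⊆
      A ∪ (C ×ˢ {j}).image Sum.inr ∪ (G ×ˢ {j}).image Sum.inr ∪ {Sum.inl j} := by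
    intro x
    simp only [Finset.mem_union, Finset.mem_insert, Finset.mem_singleton]
    tauto
  exact (hF.mono h4).trans (h3.trans (h2.trans h1))

/-- Successive repair of the nodes in `N` with help from known helpers `G`, new helpers `C`,
and the nodes of `N`. -/
theorem union_storeds_le (hF : IsRepairPolymatroid n k d B α β F) (C N : Finset (Fin n)) :
    ∀ (A : Finset (Fin n ⊕ Fin n × Fin n)) (G : Finset (Fin n)), Disjoint N G →
      Disjoint N C → d + 1 ≤ (G ∪ C).card + N.card →
      (∀ i ∈ G, ∀ j ∈ N, Sum.inr (i, j) ∈ A ∨ Sum.inl i ∈ A) →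
      F (A ∪ N.image Sum.inl) ≤
        F A + ((N.card : ℝ) * C.card + N.card * (N.card - 1) / 2) * β := by
  induction N using Finset.induction_on with
  | empty => intro A G _ _ _ _; simp
  | insert j N hj ih =>
    intro A G hG hC hd hk
    rw [Finset.disjoint_insert_left] at hG hC
    rw [Finset.card_insert_of_notMem hj] at hd ⊢
    have hdisj : Disjoint (G ∪ C) N :=
      Finset.disjoint_union_left.2 ⟨hG.2.symm, hC.2.symm⟩
    have h1 := hF.insert_stored_le A G (C ∪ N) j hG.1 (by simp [hj, hC.1]) (by
      rw [← Finset.union_assoc, Finset.card_union_of_disjoint hdisj]; omega)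
      (fun i hi => hk i hi j (Finset.mem_insert_self _ _))
    rw [Finset.card_union_of_disjoint hC.2.symm] at h1
    have h2 := ih (insert (Sum.inl j) A) (insert j G)
      (Finset.disjoint_insert_right.2 ⟨hj, hG.2⟩) hC.2 (by
        rw [Finset.insert_union, Finset.card_insert_of_notMem (by simp [hG.1, hC.1])]
        omega) (by
        intro i hi j' hj'
        rcases Finset.mem_insert.1 hi with rfl | hi
        · exact Or.inr (Finset.mem_insert_self _ _)
        · exact (hk i hi j' (Finset.mem_insert_of_mem hj')).imp
            (Finset.mem_insert_of_mem) (Finset.mem_insert_of_mem))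
    rw [Finset.image_insert, Finset.union_insert, ← Finset.insert_union]
    push_cast at h1 ⊢
    linarith

/-- A combination of basic inequalities for two parties `P₁`, `P₂` and side information `m`. -/
theorem two_party_le (hF : IsRepairPolymatroid n k d B α β F)
    {P₁ P₂ m Y₁ Y₂ Z₁ Z₂ : Finset (Fin n ⊕ Fin n × Fin n)}
    (hY₁ : Y₁ ⊆ P₁) (hZ₁ : Z₁ ⊆ P₁) (hY₂ : Y₂ ⊆ P₂) (hZ₂ : Z₂ ⊆ P₂) :
    2 * F (P₁ ∪ P₂ ∪ m) + F (Y₁ ∪ Y₂ ∪ Z₂) + F (m ∪ Z₁) ≤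
      F P₁ + F P₂ + F (Y₁ ∪ Y₂ ∪ m) + F (m ∪ Z₁ ∪ P₂) + F (m ∪ Z₂ ∪ P₁) := by
  have sub : ∀ A A' D E : Finset (Fin n ⊕ Fin n × Fin n), E ⊆ A ∪ A' → D ⊆ A → D ⊆ A' →
      F E + F D ≤ F A + F A' := fun A A' D E hE h h' =>
    (add_le_add_left (hF.mono hE) _).trans (hF.submodular h h')
  have h1 := sub (m ∪ Z₁ ∪ P₂) (m ∪ Z₂ ∪ P₁) (m ∪ Z₁ ∪ Z₂) (P₁ ∪ P₂ ∪ m)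
    (by grind) (by grind) (by grind)
  have h2 := sub (m ∪ Z₁ ∪ Z₂) (m ∪ Z₁ ∪ (Y₁ ∪ Y₂)) (m ∪ Z₁) (m ∪ Z₁ ∪ Z₂ ∪ (Y₁ ∪ Y₂))
    (by grind) (by grind) (by grind)
  have h3 := sub (m ∪ Z₁ ∪ Z₂ ∪ (Y₁ ∪ Y₂)) (P₁ ∪ P₂) (Y₁ ∪ Y₂ ∪ Z₁ ∪ Z₂) (P₁ ∪ P₂ ∪ m)
    (by grind) (by grind) (by grind)
  have h4 := sub (Y₁ ∪ Y₂ ∪ m) (Y₁ ∪ Y₂ ∪ Z₁) (Y₁ ∪ Y₂) (m ∪ Z₁ ∪ (Y₁ ∪ Y₂))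
    (by grind) (by grind) (by grind)
  have h5 := sub P₂ (Y₁ ∪ Y₂) Y₂ (P₂ ∪ Y₁) (by grind) (by grind) (by grind)
  have h6 := sub (P₂ ∪ Y₁) (Y₁ ∪ Y₂ ∪ Z₁ ∪ Z₂) (Y₁ ∪ Y₂ ∪ Z₂) (P₂ ∪ Y₁ ∪ Z₁)
    (by grind) (by grind) (by grind)
  have h7 := sub P₁ (P₂ ∪ Y₁ ∪ Z₁) (Y₁ ∪ Z₁) (P₁ ∪ P₂) (by grind) (by grind) (by grind)
  have h8 := hF.union_le (Y₁ ∪ Z₁) Y₂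
  rw [show Y₁ ∪ Z₁ ∪ Y₂ = Y₁ ∪ Y₂ ∪ Z₁ by grind] at h8
  linarith

end IsRepairPolymatroid

/-- The outer bound in terms of `t`, before optimizing over `t`. -/
theorem IsRepairPolymatroid.three_mul_le {n p t : ℕ} {B α β : ℝ}
    {F : Finset (Fin n ⊕ Fin n × Fin n) → ℝ}
    (hF : IsRepairPolymatroid n (2 * p) (3 * p) B α β F) (hn : 3 * p + 1 ≤ n) (ht : t ≤ p) :
    3 * B ≤ 3 * (p * α + p * (p - 1) / 2 * β + (p + 1) * p * β) - t * (p - t) * β := by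
  obtain ⟨q, rfl⟩ := Nat.exists_eq_add_of_le ht
  have pick : ∀ (X : Finset (Fin n)) (m : ℕ), X.card + m ≤ n →
      ∃ Y : Finset (Fin n), Disjoint X Y ∧ Y.card = m := by
    intro X m h
    obtain ⟨Y, hY, hc⟩ := Finset.exists_subset_card_eq (s := Xᶜ) (n := m) (by
      rw [Finset.card_compl, Fintype.card_fin]; omega)
    exact ⟨Y, Finset.disjoint_left.2 fun x hx hx' => Finset.mem_compl.1 (hY hx') hx, hc⟩
  obtain ⟨U₁, -, cU₁⟩ := pick ∅ t (by simp; omega)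
  obtain ⟨U₂, d₁₂, cU₂⟩ := pick U₁ (t + q) (by omega)
  have cU := Finset.card_union_of_disjoint d₁₂
  obtain ⟨N, dUN, cN⟩ := pick (U₁ ∪ U₂) q (by omega)
  have cUN := Finset.card_union_of_disjoint dUN
  obtain ⟨K, dK, cK⟩ := pick (U₁ ∪ U₂ ∪ N) (t + q) (by omega)
  have cUNK := Finset.card_union_of_disjoint dK
  obtain ⟨R, dR, cR⟩ := pick (U₁ ∪ U₂ ∪ N ∪ K) 1 (by omega)
  simp only [Finset.disjoint_union_left] at dUN dK dR
  obtain ⟨d₁N, d₂N⟩ := dUN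
  obtain ⟨⟨d₁K, d₂K⟩, dNK⟩ := dK
  obtain ⟨⟨⟨d₁R, d₂R⟩, dNR⟩, dKR⟩ := dR
  have cKR := Finset.card_union_of_disjoint dKR
  set w : Finset (Fin n) → Finset (Fin n ⊕ Fin n × Fin n) := fun J => J.image Sum.inl
  set s : Finset (Fin n) → Finset (Fin n) → Finset (Fin n ⊕ Fin n × Fin n) :=
    fun I J => (I ×ˢ J).image Sum.inr
  have mem_w : ∀ {J : Finset (Fin n)} {j}, j ∈ J → Sum.inl j ∈ w J := fun h =>
    Finset.mem_image_of_mem _ h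
  have mem_s : ∀ {I J : Finset (Fin n)} {i j}, i ∈ I → j ∈ J → Sum.inr (i, j) ∈ s I J :=
    fun hi hj => Finset.mem_image_of_mem _ (Finset.mem_product.2 ⟨hi, hj⟩)
  have out : ∀ (A : Finset (Fin n ⊕ Fin n × Fin n)) (I J J' : Finset (Fin n)), w I ⊆ A →
      Disjoint I J → Disjoint I J' → F (A ∪ (s I J ∪ s I J')) ≤ F A := by
    intro A I J J' hA hJ hJ'
    refine hF.union_helpers_le A _ fun v hv => Or.inr ?_
    rcases Finset.mem_union.1 hv with hv | hv <;>
      obtain ⟨⟨i, j⟩, hij, rfl⟩ := Finset.mem_image.1 hv <;>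
      rw [Finset.mem_product] at hij
    · exact ⟨i, j, fun e => Finset.disjoint_left.1 hJ hij.1 (e ▸ hij.2), rfl, hA (mem_w hij.1)⟩
    · exact ⟨i, j, fun e => Finset.disjoint_left.1 hJ' hij.1 (e ▸ hij.2), rfl, hA (mem_w hij.1)⟩
  have P₁ : F (w U₁ ∪ (s U₁ N ∪ s U₁ U₂)) ≤ t * α :=
    (out _ _ _ _ subset_rfl d₁N d₁₂).trans (cU₁ ▸ hF.storeds_le U₁)
  have P₂ : F (w U₂ ∪ (s U₂ N ∪ s U₂ U₁)) ≤ (t + q : ℕ) * α :=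
    (out _ _ _ _ subset_rfl d₂N d₁₂.symm).trans (cU₂ ▸ hF.storeds_le U₂)
  have two := hF.two_party_le (P₁ := w U₁ ∪ (s U₁ N ∪ s U₁ U₂))
    (P₂ := w U₂ ∪ (s U₂ N ∪ s U₂ U₁)) (m := w N) (Y₁ := s U₁ N) (Y₂ := s U₂ N)
    (Z₁ := s U₁ U₂) (Z₂ := s U₂ U₁) (by grind) (by grind) (by grind) (by grind)
  have file : B ≤ F (w U₁ ∪ (s U₁ N ∪ s U₁ U₂) ∪ (w U₂ ∪ (s U₂ N ∪ s U₂ U₁)) ∪ w N) := by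
    refine (hF.file_le (U₁ ∪ U₂ ∪ N) (by omega)).trans (hF.mono ?_)
    rw [Finset.image_union, Finset.image_union]
    change w U₁ ∪ w U₂ ∪ w N ⊆ _
    grind
  have mN := hF.storeds_le N
  have mZ₂ := hF.union_le (w N) (s U₂ U₁)
  have hZ₂ := hF.helpers_le d₁₂.symm
  -- repair of `N` with help from `U₁` and `U₂`
  have repN := hF.union_storeds_le (K ∪ R) N (s U₁ N ∪ s U₂ N) (U₁ ∪ U₂)
    (by simp [d₁N.symm, d₂N.symm]) (by simp [dNK, dNR])
    (by
      rw [Finset.card_union_of_disjoint (by simp [d₁K, d₂K, d₁R, d₂R])]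
      omega)
    (by
      intro i hi j hj
      rcases Finset.mem_union.1 hi with hi | hi
      · exact Or.inl (Finset.mem_union_left _ (mem_s hi hj))
      · exact Or.inl (Finset.mem_union_right _ (mem_s hi hj)))
  -- repair of `U₂` with help from `N` and `U₁`
  have repU₂ := hF.union_storeds_le (K ∪ R) U₂ (w N ∪ s U₁ U₂) (N ∪ U₁)
    (by simp [d₁₂.symm, d₂N]) (by simp [d₂K, d₂R])
    (by
      rw [Finset.card_union_of_disjoint (by simp [d₁K, dNK, d₁R, dNR]),
        Finset.card_union_of_disjoint d₁N.symm]
      omega)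
    (by
      intro i hi j hj
      rcases Finset.mem_union.1 hi with hi | hi
      · exact Or.inr (Finset.mem_union_left _ (mem_w hi))
      · exact Or.inl (Finset.mem_union_right _ (mem_s hi hj)))
  have extU₂ := out (w N ∪ s U₁ U₂ ∪ w U₂) U₂ N U₁ Finset.subset_union_right d₂N d₁₂.symm
  -- repair of `U₁` with help from `N` and `U₂`
  have repU₁ := hF.union_storeds_le (K ∪ R) U₁ (w N ∪ s U₂ U₁) (N ∪ U₂)
    (by simp [d₁₂, d₁N]) (by simp [d₁K, d₁R])
    (by
      rw [Finset.card_union_of_disjoint (by simp [d₂K, dNK, d₂R, dNR]),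
        Finset.card_union_of_disjoint d₂N.symm]
      omega)
    (by
      intro i hi j hj
      rcases Finset.mem_union.1 hi with hi | hi
      · exact Or.inr (Finset.mem_union_left _ (mem_w hi))
      · exact Or.inl (Finset.mem_union_right _ (mem_s hi hj)))
  have extU₁ := out (w N ∪ s U₂ U₁ ∪ w U₁) U₁ N U₂ Finset.subset_union_right d₁N d₁₂
  -- repair of `N` and then `U₁` starting from `K`
  have repKN := hF.union_storeds_le R N (w K ∪ (s U₁ N ∪ s U₂ N)) (K ∪ (U₁ ∪ U₂))
    (by simp [d₁N.symm, d₂N.symm, dNK]) dNR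
    (by
      rw [Finset.card_union_of_disjoint (by simp [d₁R, d₂R, dKR]),
        Finset.card_union_of_disjoint (by simp [d₁K.symm, d₂K.symm])]
      omega)
    (by
      intro i hi j hj
      rcases Finset.mem_union.1 hi with hi | hi
      · exact Or.inr (Finset.mem_union_left _ (mem_w hi))
      rcases Finset.mem_union.1 hi with hi | hi
      · exact Or.inl (Finset.mem_union_right _ (Finset.mem_union_left _ (mem_s hi hj)))
      · exact Or.inl (Finset.mem_union_right _ (Finset.mem_union_right _ (mem_s hi hj))))
  have repKU₁ := hF.union_storeds_le R U₁ (w K ∪ (s U₁ N ∪ s U₂ N) ∪ w N ∪ s U₂ U₁)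
    (K ∪ N ∪ U₂) (by simp [d₁N, d₁K, d₁₂]) d₁R
    (by
      rw [Finset.card_union_of_disjoint (by simp [dNR, d₂R, dKR]),
        Finset.card_union_of_disjoint (by simp [d₂N.symm, d₂K.symm]),
        Finset.card_union_of_disjoint dNK.symm]
      omega)
    (by
      intro i hi j hj
      have hwK : w K ⊆ w K ∪ (s U₁ N ∪ s U₂ N) ∪ w N ∪ s U₂ U₁ := by grind
      have hwN : w N ⊆ w K ∪ (s U₁ N ∪ s U₂ N) ∪ w N ∪ s U₂ U₁ := by grind
      rcases Finset.mem_union.1 hi with hi | hi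
      · rcases Finset.mem_union.1 hi with hi | hi
        · exact Or.inr (hwK (mem_w hi))
        · exact Or.inr (hwN (mem_w hi))
      · exact Or.inl (Finset.mem_union_right _ (mem_s hi hj)))
  have fileK : B ≤ F (w K ∪ (s U₁ N ∪ s U₂ N) ∪ w N ∪ s U₂ U₁ ∪ w U₁) := by
    refine (hF.file_le (K ∪ N ∪ U₁) ?_).trans (hF.mono ?_)
    · rw [Finset.card_union_of_disjoint (by simp [d₁N.symm, d₁K.symm]),
        Finset.card_union_of_disjoint dNK.symm]
      omega
    rw [Finset.image_union, Finset.image_union]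
    change w K ∪ w N ∪ w U₁ ⊆ _
    grind
  have condZ₂ := hF.submodular (A := w K ∪ (s U₁ N ∪ s U₂ N) ∪ w N)
    (A' := s U₁ N ∪ s U₂ N ∪ s U₂ U₁) (D := s U₁ N ∪ s U₂ N) (by grind) (by grind)
  rw [show w K ∪ (s U₁ N ∪ s U₂ N) ∪ w N ∪ (s U₁ N ∪ s U₂ N ∪ s U₂ U₁) =
    w K ∪ (s U₁ N ∪ s U₂ N) ∪ w N ∪ s U₂ U₁ by grind] at condZ₂
  have hK := hF.storeds_le K
  have hKY := hF.union_le (w K) (s U₁ N ∪ s U₂ N)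
  have hY := hF.union_le (s U₁ N) (s U₂ N)
  have hY₁ := hF.helpers_le d₁N
  have hY₂ := hF.helpers_le d₂N
  have e₂ : w N ∪ s U₁ U₂ ∪ w U₂ ∪ (s U₂ N ∪ s U₂ U₁) =
      w N ∪ s U₁ U₂ ∪ (w U₂ ∪ (s U₂ N ∪ s U₂ U₁)) := by grind
  have e₁ : w N ∪ s U₂ U₁ ∪ w U₁ ∪ (s U₁ N ∪ s U₁ U₂) =
      w N ∪ s U₂ U₁ ∪ (w U₁ ∪ (s U₁ N ∪ s U₁ U₂)) := by grind
  rw [e₂] at extU₂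
  rw [e₁] at extU₁
  change F (w N) ≤ _ at mN
  change F (w K) ≤ _ at hK
  change F (s U₂ U₁) ≤ _ at hZ₂
  change F (s U₁ N) ≤ _ at hY₁
  change F (s U₂ N) ≤ _ at hY₂
  change F (s U₁ N ∪ s U₂ N ∪ w N) ≤ _ at repN
  change F (w N ∪ s U₁ U₂ ∪ w U₂) ≤ _ at repU₂
  change F (w N ∪ s U₂ U₁ ∪ w U₁) ≤ _ at repU₁
  change F (w K ∪ (s U₁ N ∪ s U₂ N) ∪ w N) ≤ _ at repKN
  change F (w K ∪ (s U₁ N ∪ s U₂ N) ∪ w N ∪ s U₂ U₁ ∪ w U₁) ≤ _ at repKU₁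
  clear_value w s
  rw [cKR] at repN repU₂ repU₁
  simp only [cU₁, cU₂, cN, cK, cR] at *
  push_cast at *
  linarith

/-- for `k = 2p`, `d = 3p`, `p ≥ 2`: `B ≤ B_p - (p² - 1)β/16`. -/
theorem stmt_5 {Ω : Type*} [Fintype Ω] {n p : ℕ} {B α β : ℝ} {P : Ω → ℝ}
    {σM : Type*} {σW : Fin n → Type*} {σS : Fin n → Fin n → Type*}
    {M : Ω → σM} {W : ∀ j, Ω → σW j} {S : ∀ i j, Ω → σS i j}
    (hp : 2 ≤ p)
    (hcode : IsRegenCode n (2 * p) (3 * p) B α β P M W S) :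
    B ≤ Bfun (2 * p) (3 * p) p α β - ((p : ℝ) ^ 2 - 1) * β / 16 := by
  have h := hcode.isRepairPolymatroid.three_mul_le hcode.hdn (Nat.div_le_self p 2)
  have hB : Bfun (2 * p) (3 * p) p α β =
      p * α + p * (p - 1) / 2 * β + (p + 1) * p * β := by
    unfold Bfun
    rw [show 2 * p - p = p by omega, show 3 * p + 1 - 2 * p = p + 1 by omega]
    push_cast [Nat.cast_sub (show 1 ≤ p by omega)]
    ring
  have ht : (p : ℝ) ^ 2 - 1 ≤ 4 * (((p / 2 : ℕ) : ℝ) * (p - (p / 2 : ℕ))) := by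
    obtain ⟨m, hm | hm⟩ := p.even_or_odd'
    · rw [show p / 2 = m by omega, hm]
      push_cast
      linarith
    · rw [show p / 2 = m by omega, hm]
      push_cast
      linarith
  have hp1 : (1 : ℝ) ≤ p := by exact_mod_cast (show 1 ≤ p by omega)
  have hsq : 0 ≤ ((p : ℝ) ^ 2 - 1) * β := mul_nonneg (by nlinarith) hcode.hβ
  rw [hB]
  linarith [mul_le_mul_of_nonneg_right ht hcode.hβ]
end
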